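/- A finite group G satisfies ℓ(G) = λ(G) if and only if G is supersolvable (Iwasawa's theorem). -/

import Mathlib

/-- A chain `⊥ = c 0 < c 1 < ⋯ < c n = ⊤` of subgroups is *unrefinable* if each
`c i` is maximal in `c (i+1)` (i.e. consecutive terms form a covering pair). -/
def IsUnrefinableChain {G : Type*} [Group G] {n : ℕ} (c : Fin (n + 1) → Subgroup G) : Prop :=
  c 0 = ⊥ ∧ c (Fin.last n) = ⊤ ∧ ∀ i : Fin n, c i.castSucc ⋖ c i.succ

/-- The length `ℓ(G)`: the maximal length of an unrefinable chain of subgroups. -/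
noncomputable def groupLength (G : Type*) [Group G] : ℕ :=
  sSup {n | ∃ c : Fin (n + 1) → Subgroup G, IsUnrefinableChain c}

/-- The depth `λ(G)`: the minimal length of an unrefinable chain of subgroups. -/
noncomputable def groupDepth (G : Type*) [Group G] : ℕ :=
  sInf {n | ∃ c : Fin (n + 1) → Subgroup G, IsUnrefinableChain c}

/-- `d(G)`: the minimal number of generators of `G`. -/
noncomputable def minGen (G : Type*) [Group G] : ℕ :=
  sInf {n | ∃ S : Finset G, S.card = n ∧ Subgroup.closure (S : Set G) = ⊤}

/-- `m(G)`: the maximal size of an independent generating set of `G`. -/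
noncomputable def maxIndep (G : Type*) [Group G] : ℕ :=
  sSup {n | ∃ S : Finset G, S.card = n ∧ Subgroup.closure (S : Set G) = ⊤ ∧
    ∀ a ∈ S, Subgroup.closure ((S : Set G) \ {a}) < ⊤}

/-- Given a tuple `x : Fin d → G`, the chain of subgroups
`⟨⟩ ≤ ⟨x 0⟩ ≤ ⟨x 0, x 1⟩ ≤ ⋯ ≤ ⟨x 0, …, x (d-1)⟩`. -/
def partialClosure {G : Type*} [Group G] {d : ℕ} (x : Fin d → G) (i : Fin (d + 1)) :
    Subgroup G :=
  Subgroup.closure (x '' {j | (j : ℕ) < (i : ℕ)})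

/-- `G` is *`d`-uniformly generated* if strictly ascending chains
`1 < ⟨x 1⟩ < ⋯ < ⟨x 1, …, x d⟩` exist, and every such chain ends at `G`. -/
def DUnifGen (G : Type*) [Group G] (d : ℕ) : Prop :=
  (∃ x : Fin d → G, StrictMono (partialClosure x)) ∧
  ∀ x : Fin d → G, StrictMono (partialClosure x) → Subgroup.closure (Set.range x) = ⊤

/-- `G` is *uniformly generated* if it is `d(G)`-uniformly generated. -/
def UniformlyGenerated (G : Type*) [Group G] : Prop :=
  DUnifGen G (minGen G)

/-- `G` is elementary abelian: isomorphic to `(C_p)^k` for some prime `p`. -/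
def IsElementaryAbelian (G : Type*) [Group G] : Prop :=
  ∃ (p k : ℕ), p.Prime ∧ Nonempty (G ≃* (Fin k → Multiplicative (ZMod p)))

/-- `G` is supersolvable: it has a normal series (all terms normal in `G`)
with cyclic factors (each step is obtained by adjoining a single element). -/
def IsSupersolvableGroup (G : Type*) [Group G] : Prop :=
  ∃ (n : ℕ) (c : Fin (n + 1) → Subgroup G),
    c 0 = ⊥ ∧ c (Fin.last n) = ⊤ ∧ Monotone c ∧ (∀ i, (c i).Normal) ∧
    ∀ i : Fin n, ∃ g : G, c i.succ = c i.castSucc ⊔ Subgroup.zpowers g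

/-- `G` is isomorphic to `(C_p)^{k} ⋊ C_q` where `C_q` acts by a nontrivial scalar:
expressed internally via a normal elementary abelian `p`-subgroup `N`, an element `g`
of order `q` complementing it, whose conjugation action raises every element of `N`
to a fixed power `c` which is a nontrivial scalar of multiplicative order `q` mod `p`. -/
def IsScalarExtension (G : Type*) [Group G] : Prop :=
  ∃ (p q : ℕ), p.Prime ∧ q.Prime ∧
    ∃ (N : Subgroup G) (g : G) (c : ℕ),
      N.Normal ∧ (∀ a ∈ N, ∀ b ∈ N, a * b = b * a) ∧ (∀ a ∈ N, a ^ p = 1) ∧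
      orderOf g = q ∧
      N ⊔ Subgroup.zpowers g = ⊤ ∧ N ⊓ Subgroup.zpowers g = ⊥ ∧
      (∀ n ∈ N, g * n * g⁻¹ = n ^ c) ∧
      c % p ≠ 1 % p ∧ c ^ q % p = 1 % p

open ArithmeticFunction (cardFactors)

/-- `CovChain n a b` says that there is an unrefinable chain of length `n` from `a` to `b`. -/
inductive CovChain {α : Type*} [Preorder α] : ℕ → α → α → Prop
  | refl (a : α) : CovChain 0 a a
  | step {n : ℕ} {a b c : α} : CovChain n a b → b ⋖ c → CovChain (n + 1) a c

theorem Subgroup.relIndex_ne_zero_of_finite {G : Type*} [Group G] [Finite G] (A B : Subgroup G) :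
    A.relIndex B ≠ 0 :=
  Nat.card_pos.ne'

namespace CovChain

section Order

variable {α β : Type*}

theorem le [Preorder α] {n : ℕ} {a b : α} (h : CovChain n a b) : a ≤ b := by
  induction h with
  | refl => exact le_rfl
  | step _ hc ih => exact ih.trans hc.le

theorem trans [Preorder α] {m n : ℕ} {a b c : α} (h : CovChain m a b) (h' : CovChain n b c) :
    CovChain (m + n) a c := by
  induction h' with
  | refl => exact h
  | step _ hc ih => exact (ih h).step hc

theorem map [Preorder α] [Preorder β] (f : α ↪o β) (hf : (Set.range f).OrdConnected) {n : ℕ}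
    {a b : α} (h : CovChain n a b) : CovChain n (f a) (f b) := by
  induction h with
  | refl => exact .refl _
  | step _ hc ih => exact ih.step (hc.image f hf)

theorem exists_of_le [PartialOrder α] [Finite α] {a b : α} (h : a ≤ b) :
    ∃ n, CovChain n a b := by
  induction b using WellFoundedLT.induction with
  | ind b ih =>
    obtain rfl | hlt := h.eq_or_lt
    · exact ⟨0, .refl _⟩
    · obtain ⟨c, hac, hcb⟩ := hlt.exists_le_covby
      obtain ⟨n, hn⟩ := ih c hcb.lt hac
      exact ⟨n + 1, hn.step hcb⟩

theorem of_fin [Preorder α] {n : ℕ} (c : Fin (n + 1) → α)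
    (h : ∀ i : Fin n, c i.castSucc ⋖ c i.succ) : CovChain n (c 0) (c (Fin.last n)) := by
  induction n with
  | zero => exact .refl _
  | succ n ih =>
    exact (ih (fun i ↦ c i.castSucc) fun i ↦ h i.castSucc).step (h (Fin.last n))

theorem exists_fin [Preorder α] {n : ℕ} {a b : α} (h : CovChain n a b) :
    ∃ c : Fin (n + 1) → α, c 0 = a ∧ c (Fin.last n) = b ∧
      ∀ i : Fin n, c i.castSucc ⋖ c i.succ := by
  induction h with
  | refl a => exact ⟨fun _ ↦ a, rfl, rfl, fun i ↦ i.elim0⟩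
  | @step n a b d _ hd ih =>
    obtain ⟨c, h0, hl, hc⟩ := ih
    refine ⟨Fin.snoc c d, ?_, by simp, fun i ↦ ?_⟩
    · rw [← h0]
      exact Fin.snoc_castSucc (α := fun _ ↦ α) d c 0
    · induction i using Fin.lastCases with
      | last => simpa [hl] using hd
      | cast i =>
        rw [Fin.snoc_castSucc, Fin.succ_castSucc, Fin.snoc_castSucc]
        exact hc i

end Order

theorem le_cardFactors {G : Type*} [Group G] [Finite G] {n : ℕ} {A B : Subgroup G}
    (h : CovChain n A B) : n ≤ cardFactors (A.relIndex B) := by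
  induction h with
  | refl => simp
  | @step n A B C h hc ih =>
    rw [← Subgroup.relIndex_mul_relIndex A B C h.le hc.le,
      ArithmeticFunction.cardFactors_mul (Subgroup.relIndex_ne_zero_of_finite _ _)
        (Subgroup.relIndex_ne_zero_of_finite _ _)]
    have h1 : B.relIndex C ≠ 1 := fun h ↦ hc.lt.not_ge (Subgroup.relIndex_eq_one.mp h)
    have h0 : B.relIndex C ≠ 0 := Subgroup.relIndex_ne_zero_of_finite _ _
    have : 0 < cardFactors (B.relIndex C) :=
      ArithmeticFunction.cardFactors_pos_iff_one_lt.mpr (by omega)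
    omega

end CovChain

/-- Every covering pair of subgroups of `G` has prime index. -/
def HasPrimeCovers (G : Type*) [Group G] : Prop :=
  ∀ A B : Subgroup G, A ⋖ B → (A.relIndex B).Prime

/-- Any two unrefinable chains of subgroups with the same ends have the same length. -/
def HasUniformChains (G : Type*) [Group G] : Prop :=
  ∀ (m n : ℕ) (A B : Subgroup G), CovChain m A B → CovChain n A B → m = n

theorem exists_isUnrefinableChain_iff {G : Type*} [Group G] {n : ℕ} :
    (∃ c : Fin (n + 1) → Subgroup G, IsUnrefinableChain c) ↔ CovChain n (⊥ : Subgroup G) ⊤ := by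
  constructor
  · rintro ⟨c, h0, hl, hc⟩
    rw [← h0, ← hl]
    exact .of_fin c hc
  · exact fun h ↦ h.exists_fin

section Uniform

variable {G : Type*} [Group G]

/-- The order embedding of subgroups of `H` into subgroups of `G`. -/
def mapSubtypeEmbedding (H : Subgroup G) : Subgroup H ↪o Subgroup G :=
  OrderEmbedding.ofMapLEIff (Subgroup.map H.subtype) fun _ _ ↦
    Subgroup.map_le_map_iff_of_injective H.subtype_injective

theorem ordConnected_range_map_subtype (H : Subgroup G) :
    (Set.range (mapSubtypeEmbedding H)).OrdConnected := by
  refine ⟨?_⟩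
  rintro _ ⟨A, rfl⟩ _ ⟨B, rfl⟩ C ⟨_, hC⟩
  refine ⟨C.subgroupOf H, ?_⟩
  exact Subgroup.map_subgroupOf_eq_of_le (hC.trans (Subgroup.map_subtype_le B))

/-- The order embedding of subgroups of `G ⧸ N` into subgroups of `G` by taking preimages. -/
def comapMkEmbedding (N : Subgroup G) [N.Normal] : Subgroup (G ⧸ N) ↪o Subgroup G :=
  OrderEmbedding.ofMapLEIff (Subgroup.comap (QuotientGroup.mk' N)) fun _ _ ↦
    Subgroup.comap_le_comap_of_surjective (QuotientGroup.mk'_surjective N)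

theorem ordConnected_range_comapMkEmbedding (N : Subgroup G) [N.Normal] :
    (Set.range (comapMkEmbedding N)).OrdConnected := by
  refine ⟨?_⟩
  rintro _ ⟨A, rfl⟩ _ ⟨B, rfl⟩ C ⟨hC, _⟩
  refine ⟨C.map (QuotientGroup.mk' N), Subgroup.comap_map_eq_self ?_⟩
  exact (Subgroup.ker_le_comap _ A).trans hC

theorem HasUniformChains.subgroup (h : HasUniformChains G) (H : Subgroup G) :
    HasUniformChains H := fun m n _ _ h₁ h₂ ↦
  h m n _ _ (h₁.map _ (ordConnected_range_map_subtype H))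
    (h₂.map _ (ordConnected_range_map_subtype H))

theorem HasUniformChains.quotient (h : HasUniformChains G) (N : Subgroup G) [N.Normal] :
    HasUniformChains (G ⧸ N) := fun m n _ _ h₁ h₂ ↦
  h m n _ _ (h₁.map _ (ordConnected_range_comapMkEmbedding N))
    (h₂.map _ (ordConnected_range_comapMkEmbedding N))

theorem HasPrimeCovers.subgroup (h : HasPrimeCovers G) (H : Subgroup G) :
    HasPrimeCovers H := fun A B hAB ↦ by
  have := h _ _ (hAB.image _ (ordConnected_range_map_subtype H))
  exact Subgroup.relIndex_map_map_of_injective A B H.subtype_injective ▸ this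

theorem HasPrimeCovers.quotient (h : HasPrimeCovers G) (N : Subgroup G) [N.Normal] :
    HasPrimeCovers (G ⧸ N) := fun A B hAB ↦ by
  have := h _ _ (hAB.image _ (ordConnected_range_comapMkEmbedding N))
  change ((A.comap (QuotientGroup.mk' N)).relIndex (B.comap (QuotientGroup.mk' N))).Prime at this
  rwa [Subgroup.relIndex_comap,
    Subgroup.map_comap_eq_self_of_surjective (QuotientGroup.mk'_surjective N)] at this

variable [Finite G]

theorem HasPrimeCovers.eq_cardFactors (h : HasPrimeCovers G) {n : ℕ} {A B : Subgroup G}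
    (hc : CovChain n A B) : n = cardFactors (A.relIndex B) := by
  induction hc with
  | refl => simp
  | @step n A B C hc' hc ih =>
    rw [← Subgroup.relIndex_mul_relIndex A B C hc'.le hc.le,
      ArithmeticFunction.cardFactors_mul (Subgroup.relIndex_ne_zero_of_finite _ _)
        (Subgroup.relIndex_ne_zero_of_finite _ _),
      ArithmeticFunction.cardFactors_apply_prime (h B C hc), ← ih]

theorem HasPrimeCovers.hasUniformChains (h : HasPrimeCovers G) : HasUniformChains G :=
  fun _ _ _ _ h₁ h₂ ↦ (h.eq_cardFactors h₁).trans (h.eq_cardFactors h₂).symm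

theorem HasUniformChains.hasPrimeCovers (h : HasUniformChains G)
    (hc : CovChain (cardFactors (Nat.card G)) (⊥ : Subgroup G) ⊤) : HasPrimeCovers G := by
  intro A B hAB
  obtain ⟨a, ha⟩ := CovChain.exists_of_le (bot_le : ⊥ ≤ A)
  obtain ⟨b, hb⟩ := CovChain.exists_of_le (le_top : B ≤ ⊤)
  have hlen := h _ _ _ _ hc ((ha.step hAB).trans hb)
  have hcard : (⊥ : Subgroup G).relIndex A * A.relIndex B * B.relIndex ⊤ = Nat.card G := by
    rw [Subgroup.relIndex_mul_relIndex _ _ _ bot_le hAB.le,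
      Subgroup.relIndex_mul_relIndex _ _ _ bot_le le_top]
    simp
  rw [← hcard, ArithmeticFunction.cardFactors_mul
      (mul_ne_zero (Subgroup.relIndex_ne_zero_of_finite _ _)
        (Subgroup.relIndex_ne_zero_of_finite _ _)) (Subgroup.relIndex_ne_zero_of_finite _ _),
    ArithmeticFunction.cardFactors_mul (Subgroup.relIndex_ne_zero_of_finite _ _)
        (Subgroup.relIndex_ne_zero_of_finite _ _)] at hlen
  have h₁ := ha.le_cardFactors
  have h₂ := hb.le_cardFactors
  have h₃ := ((CovChain.refl A).step hAB).le_cardFactors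
  exact ArithmeticFunction.cardFactors_eq_one_iff_prime.mp (by omega)

theorem HasUniformChains.hasPrimeCovers_of_normal (h : HasUniformChains G) (N : Subgroup G)
    [N.Normal] (hN : HasPrimeCovers N) (hQ : HasPrimeCovers (G ⧸ N)) : HasPrimeCovers G := by
  apply h.hasPrimeCovers
  obtain ⟨a, ha⟩ := CovChain.exists_of_le (bot_le : (⊥ : Subgroup N) ≤ ⊤)
  obtain ⟨b, hb⟩ := CovChain.exists_of_le (bot_le : (⊥ : Subgroup (G ⧸ N)) ≤ ⊤)
  have ha' := hN.eq_cardFactors ha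
  have hb' := hQ.eq_cardFactors hb
  have ha₁ := ha.map _ (ordConnected_range_map_subtype N)
  have hb₁ := hb.map _ (ordConnected_range_comapMkEmbedding N)
  have e₁ : mapSubtypeEmbedding N ⊥ = ⊥ := Subgroup.map_bot _
  have e₂ : mapSubtypeEmbedding N ⊤ = N :=
    (MonoidHom.range_eq_map _).symm.trans N.range_subtype
  have e₃ : comapMkEmbedding N ⊥ = N := by simp [comapMkEmbedding]
  have e₄ : comapMkEmbedding N ⊤ = ⊤ := Subgroup.comap_top _
  rw [e₁, e₂] at ha₁
  rw [e₃, e₄] at hb₁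
  rw [Subgroup.relIndex_bot_left, Subgroup.card_top] at ha' hb'
  rw [N.card_eq_card_quotient_mul_card_subgroup, ArithmeticFunction.cardFactors_mul
    Nat.card_pos.ne' Nat.card_pos.ne', ← ha', ← hb', add_comm]
  exact ha₁.trans hb₁

theorem groupLength_eq_groupDepth_iff_hasUniformChains :
    groupLength G = groupDepth G ↔ HasUniformChains G := by
  simp only [groupLength, groupDepth, exists_isUnrefinableChain_iff]
  set S := {n | CovChain n (⊥ : Subgroup G) ⊤} with hS
  have hb : BddAbove S := ⟨_, fun n hn ↦ CovChain.le_cardFactors hn⟩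
  obtain ⟨k, hk⟩ := CovChain.exists_of_le (bot_le : (⊥ : Subgroup G) ≤ ⊤)
  constructor
  · intro h m n A B hm hn
    obtain ⟨a, ha⟩ := CovChain.exists_of_le (bot_le : ⊥ ≤ A)
    obtain ⟨b, hb'⟩ := CovChain.exists_of_le (le_top : B ≤ ⊤)
    have key : ∀ i ∈ S, i = sInf S := fun i hi ↦
      le_antisymm (h ▸ le_csSup hb hi) (Nat.sInf_le hi)
    have h₁ := key _ ((ha.trans hm).trans hb')
    have h₂ := key _ ((ha.trans hn).trans hb')
    omega
  · intro h
    have : S = {k} := Set.eq_singleton_iff_unique_mem.mpr ⟨hk, fun n hn ↦ h _ _ _ _ hn hk⟩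
    simp [this]

end Uniform

section Supersolvable

open Relation (ReflTransGen)

variable {G : Type*} [Group G]

/-- One step of a normal series with cyclic factors. -/
def IsCyclicStep (K L : Subgroup G) : Prop :=
  K.Normal ∧ L.Normal ∧ ∃ g : G, L = K ⊔ Subgroup.zpowers g

/-- One step of a normal series with factors of prime order. -/
def IsPrimeStep (K L : Subgroup G) : Prop :=
  K.Normal ∧ L.Normal ∧ K ≤ L ∧ (K.relIndex L).Prime

theorem isSupersolvableGroup_iff_reflTransGen :
    IsSupersolvableGroup G ↔ ReflTransGen IsCyclicStep (⊥ : Subgroup G) ⊤ := by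
  constructor
  · rintro ⟨n, c, h0, hl, -, hn, hc⟩
    rw [← h0, ← hl]
    generalize Fin.last n = i
    induction i using Fin.induction with
    | zero => exact .refl
    | succ i ih => exact ih.tail ⟨hn _, hn _, hc i⟩
  · intro h
    suffices ∀ K : Subgroup G, ReflTransGen IsCyclicStep ⊥ K →
        ∃ (n : ℕ) (c : Fin (n + 1) → Subgroup G), c 0 = ⊥ ∧ c (Fin.last n) = K ∧ (∀ i, (c i).Normal) ∧
          ∀ i : Fin n, ∃ g : G, c i.succ = c i.castSucc ⊔ Subgroup.zpowers g by
      obtain ⟨n, c, h0, hl, hn, hc⟩ := this ⊤ h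
      refine ⟨n, c, h0, hl, Fin.monotone_iff_le_succ.mpr fun i ↦ ?_, hn, hc⟩
      obtain ⟨g, hg⟩ := hc i
      exact hg ▸ le_sup_left
    intro K hK
    induction hK with
    | refl => exact ⟨0, fun _ ↦ ⊥, rfl, rfl, fun _ ↦ inferInstance, fun i ↦ i.elim0⟩
    | @tail K L _ hKL ih =>
      obtain ⟨n, c, h0, hl, hn, hc⟩ := ih
      refine ⟨n + 1, Fin.snoc c L, ?_, by simp, fun i ↦ ?_, fun i ↦ ?_⟩
      · rw [← h0]
        exact Fin.snoc_castSucc (α := fun _ ↦ Subgroup G) L c 0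
      · induction i using Fin.lastCases with
        | last => simpa using hKL.2.1
        | cast i => simpa using hn i
      · induction i using Fin.lastCases with
        | last => simpa [hl] using hKL.2.2
        | cast i =>
          rw [Fin.snoc_castSucc, Fin.succ_castSucc, Fin.snoc_castSucc]
          exact hc i

theorem Subgroup.zpowers_pow_normal {a : G} (h : (Subgroup.zpowers a).Normal) (k : ℕ) :
    (Subgroup.zpowers (a ^ k)).Normal := by
  refine ⟨fun _ ⟨j, hj⟩ x ↦ ?_⟩
  obtain ⟨i, hi⟩ := Subgroup.mem_zpowers_iff.mp (h.conj_mem a (Subgroup.mem_zpowers a) x)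
  refine Subgroup.mem_zpowers_iff.mpr ⟨i * j, ?_⟩
  simp only at hj
  rw [← hj, ← conj_zpow, ← conj_pow, ← hi]
  simp only [← zpow_natCast, ← zpow_mul]
  congr 1
  ring

/-- A cyclic step refines to a series of prime steps. -/
theorem IsCyclicStep.reflTransGen_isPrimeStep [Finite G] {K L : Subgroup G}
    (h : IsCyclicStep K L) : ReflTransGen IsPrimeStep K L := by
  induction K using WellFoundedGT.induction with
  | ind K ih =>
    obtain ⟨hK, hL, g, hg⟩ := h
    have hKL : K ≤ L := hg ▸ le_sup_left
    by_cases h1 : K.relIndex L = 1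
    · rw [le_antisymm hKL (Subgroup.relIndex_eq_one.mp h1)]
    set f := QuotientGroup.mk' K
    have hf : Function.Surjective f := QuotientGroup.mk'_surjective K
    have hker : f.ker = K := QuotientGroup.ker_mk' K
    have hmap : L.map f = Subgroup.zpowers (f g) := by
      rw [hg, Subgroup.map_sup, MonoidHom.map_zpowers, (Subgroup.map_eq_bot_iff K).mpr hker.ge,
        bot_sup_eq]
    have hord (M : Subgroup G) : K.relIndex M = Nat.card (M.map f) := by
      rw [← Subgroup.relIndex_ker, hker]
    have hLf : K.relIndex L = orderOf (f g) := by rw [hord, hmap, Nat.card_zpowers]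
    obtain ⟨p, hp, hpd⟩ := Nat.exists_prime_and_dvd h1
    rw [hLf] at hpd
    set a := f g ^ (orderOf (f g) / p)
    have ha : orderOf a = p := orderOf_pow_orderOf_div (orderOf_pos _).ne' hpd
    have hgn : (Subgroup.zpowers (f g)).Normal := by
      rw [← hmap]
      exact hL.map f hf
    have hnorm : (Subgroup.zpowers a).Normal := Subgroup.zpowers_pow_normal hgn _
    have hKM : K ≤ (Subgroup.zpowers a).comap f := hker.ge.trans (Subgroup.ker_le_comap f _)
    have hprime : (K.relIndex ((Subgroup.zpowers a).comap f)).Prime := by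
      rwa [hord, Subgroup.map_comap_eq_self_of_surjective hf, Nat.card_zpowers, ha]
    refine .head ⟨hK, hnorm.comap f, hKM, hprime⟩ (ih _ (lt_of_le_of_ne hKM fun h ↦ ?_)
      ⟨hnorm.comap f, hL, g, le_antisymm ?_ (sup_le ?_ ?_)⟩)
    · rw [← h, Subgroup.relIndex_self] at hprime
      exact Nat.not_prime_one hprime
    · exact hg.trans_le (sup_le_sup_right hKM _)
    · rw [← Subgroup.comap_map_eq_self (hker.trans_le hKL), hmap]
      exact Subgroup.comap_mono (Subgroup.zpowers_le.mpr (Subgroup.pow_mem _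
        (Subgroup.mem_zpowers _) _))
    · exact hg ▸ le_sup_right

theorem HasPrimeCovers.of_reflTransGen [Finite G]
    (h : ReflTransGen IsPrimeStep (⊥ : Subgroup G) ⊤) : HasPrimeCovers G := by
  intro A B hAB
  suffices ∀ K : Subgroup G, ReflTransGen IsPrimeStep ⊥ K → K ⊓ B ≤ A ∨ (A.relIndex B).Prime by
    refine (this ⊤ h).resolve_left ?_
    rw [top_inf_eq]
    exact hAB.lt.not_ge
  intro K hK
  induction hK with
  | refl => simp
  | @tail K L _ hKL ih =>
    obtain ⟨hK, hL, hle, hp⟩ := hKL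
    refine ih.elim (fun hKB ↦ or_iff_not_imp_left.mpr fun hLB ↦ ?_) .inr
    have hsup : A ⊔ L ⊓ B = B := (hAB.eq_or_eq le_sup_left (sup_le hAB.le inf_le_right)).resolve_left
      fun h ↦ hLB (h ▸ le_sup_right)
    have hBL : B ≤ A ⊔ L := hsup.ge.trans (sup_le_sup_left inf_le_left A)
    have hLAB : L.relIndex A = L.relIndex B :=
      le_antisymm (Subgroup.relIndex_le_of_le_right hAB.le (Subgroup.relIndex_ne_zero_of_finite _ _))
        ((Subgroup.relIndex_le_of_le_right hBL (Subgroup.relIndex_ne_zero_of_finite _ _)).trans_eq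
          (Subgroup.relIndex_sup_right A L))
    have hAL : A.relIndex (L ⊓ B) = A.relIndex B := by
      have := Subgroup.relIndex_inf_mul_relIndex A L B
      rw [← Subgroup.relIndex_mul_relIndex (A ⊓ L) A B inf_le_left hAB.le,
        Subgroup.inf_relIndex_left, hLAB, mul_comm] at this
      exact Nat.eq_of_mul_eq_mul_left
        (Nat.pos_of_ne_zero (Subgroup.relIndex_ne_zero_of_finite _ _)) this
    have hdvd : A.relIndex B ∣ K.relIndex L := by
      rw [← hAL]
      refine (Subgroup.relIndex_dvd_of_le_left (L ⊓ B)
        (?_ : K ⊓ (L ⊓ B) ≤ A)).trans ?_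
      · exact (inf_le_inf_left K inf_le_right).trans hKB
      · rw [Subgroup.inf_relIndex_right, ← Subgroup.relIndex_subgroupOf inf_le_left]
        exact Subgroup.relIndex_dvd_index_of_normal _ _
    refine ((Nat.dvd_prime hp).mp hdvd).elim (fun h ↦ ?_) fun h ↦ h ▸ hp
    exact absurd (Subgroup.relIndex_eq_one.mp h) hAB.lt.not_ge

theorem IsSupersolvableGroup.hasPrimeCovers [Finite G] (h : IsSupersolvableGroup G) :
    HasPrimeCovers G :=
  .of_reflTransGen <| Relation.reflTransGen_closed
    (fun _ _ (h : IsCyclicStep _ _) ↦ h.reflTransGen_isPrimeStep) _ _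
    (isSupersolvableGroup_iff_reflTransGen.mp h)

end Supersolvable

section PrimeCovers

theorem Subgroup.relIndex_sup_of_inf_eq_bot {G : Type*} [Group G] [Finite G] {N H : Subgroup G}
    [N.Normal] (hHN : N ⊓ H = ⊥) : H.relIndex (N ⊔ H) = Nat.card N := by
  have h₁ := Subgroup.relIndex_mul_relIndex ⊥ H (N ⊔ H) bot_le le_sup_right
  have h₂ := Subgroup.relIndex_mul_relIndex ⊥ N (N ⊔ H) bot_le le_sup_left
  rw [Subgroup.relIndex_sup_left, ← Subgroup.inf_relIndex_right N H, hHN] at h₂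
  simp only [Subgroup.relIndex_bot_left] at h₁ h₂
  rw [← h₂, mul_comm] at h₁
  exact Nat.eq_of_mul_eq_mul_right Nat.card_pos h₁

theorem HasPrimeCovers.normal_sylow {G : Type*} [Group G] [Finite G] (h : HasPrimeCovers G)
    {r : ℕ} [Fact r.Prime] (hr : ∀ q : ℕ, q.Prime → q ∣ Nat.card G → q ≤ r) (P : Sylow r G) :
    (P : Subgroup G).Normal := by
  rw [← Subgroup.normalizer_eq_top_iff]
  refine (eq_top_or_exists_le_coatom _).resolve_right ?_
  rintro ⟨M, hM, hPM⟩
  have hPM' : (P : Subgroup G) ≤ M := Subgroup.le_normalizer.trans hPM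
  have hprime : M.index.Prime := by
    have := h M ⊤ (covBy_top_iff.mpr hM)
    rwa [Subgroup.relIndex_top_right] at this
  have hlt : M.index < r := by
    refine lt_of_le_of_ne (hr _ hprime M.index_dvd_card) fun heq ↦ P.not_dvd_index ?_
    have := Subgroup.index_dvd_of_le hPM'
    rwa [heq] at this
  have hcore : (P : Subgroup G) ≤ M.normalCore := by
    rw [Subgroup.normalCore_eq_ker, ← Subgroup.map_eq_bot_iff]
    set f := MulAction.toPermHom G (G ⧸ M)
    obtain ⟨k, hk⟩ := IsPGroup.iff_card.mp (P.isPGroup'.map f)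
    have hdvd := ((P : Subgroup G).map f).card_subgroup_dvd_card
    rw [Nat.card_perm, ← Subgroup.index, hk] at hdvd
    rw [← Subgroup.card_eq_one, hk]
    obtain _ | k := k
    · simp
    · exact absurd ((Fact.out : r.Prime).dvd_factorial.mp ((dvd_pow_self r k.succ_ne_zero).trans hdvd))
        hlt.not_ge
  have := P.normalizer_sup_eq_top' hcore
  exact hM.1 (top_le_iff.mp (this.ge.trans (sup_le hPM M.normalCore_le)))

/-- The largest prime divisor of the order has a Sylow subgroup which is normal; a minimal normal
subgroup inside its centre has prime order. -/
theorem HasPrimeCovers.exists_normal_prime_card {G : Type*} [Group G] [Finite G] [Nontrivial G]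
    (h : HasPrimeCovers G) : ∃ N : Subgroup G, N.Normal ∧ (Nat.card N).Prime := by
  obtain ⟨r, hr, hmax⟩ : ∃ r : ℕ, (r.Prime ∧ r ∣ Nat.card G) ∧
      ∀ q : ℕ, q.Prime → q ∣ Nat.card G → q ≤ r := by
    have hne : (Nat.card G).primeFactors.Nonempty :=
      Nat.nonempty_primeFactors.mpr Finite.one_lt_card
    refine ⟨(Nat.card G).primeFactors.max' hne, ?_, fun q hq hd ↦ ?_⟩
    · have := Finset.max'_mem _ hne
      exact ⟨Nat.prime_of_mem_primeFactors this, Nat.dvd_of_mem_primeFactors this⟩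
    · exact Finset.le_max' _ _ (Nat.mem_primeFactors.mpr ⟨hq, hd, Nat.card_pos.ne'⟩)
  obtain ⟨hr, hrd⟩ := hr
  have : Fact r.Prime := ⟨hr⟩
  obtain ⟨P⟩ : Nonempty (Sylow r G) := inferInstance
  have hP : (P : Subgroup G).Normal := h.normal_sylow hmax P
  set Z : Subgroup G := (Subgroup.center P).map (P : Subgroup G).subtype
  have hZP : Z ≤ P := Subgroup.map_subtype_le _
  have hZcomm : ∀ z ∈ Z, ∀ x ∈ P, x * z = z * x := by
    rintro _ ⟨z, hz, rfl⟩ x hx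
    exact congrArg Subtype.val (Subgroup.mem_center_iff.mp hz ⟨x, hx⟩)
  have hZ : Z.Normal := inferInstance
  have hZbot : Z ≠ ⊥ := by
    have : Nontrivial P := by
      rw [← Finite.one_lt_card_iff_nontrivial]
      have := P.dvd_card_of_dvd_card hrd
      exact (Nat.one_lt_iff_ne_zero_and_ne_one.mpr ⟨Nat.card_pos.ne', fun h ↦
        hr.one_lt.ne' (Nat.dvd_one.mp (h ▸ this))⟩)
    have hc := P.isPGroup'.bot_lt_center
    rw [Ne, Subgroup.map_eq_bot_iff_of_injective _ (Subgroup.subtype_injective _)]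
    exact hc.ne'
  obtain ⟨N, ⟨hN, hNbot, hNZ⟩, hmin⟩ :=
    (Set.toFinite {N : Subgroup G | N.Normal ∧ N ≠ ⊥ ∧ N ≤ Z}).exists_minimal ⟨Z, hZ, hZbot, le_rfl⟩
  refine ⟨N, hN, ?_⟩
  obtain ⟨H, hH⟩ := Subgroup.exists_right_complement'_of_coprime P.card_coprime_index
  have hNP := hNZ.trans hZP
  have hHN : N ⊓ H = ⊥ := le_bot_iff.mp ((inf_le_inf_right H hNP).trans hH.disjoint.le_bot)
  have hcov : H ⋖ N ⊔ H := by
    refine ⟨lt_of_le_of_ne le_sup_right fun heq ↦ hNbot ?_, fun K hHK hK ↦ ?_⟩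
    · rw [← hHN, eq_comm, inf_eq_left, heq]
      exact le_sup_left
    · have hNK : (N ⊓ K).Normal := by
        rw [← Subgroup.normalizer_eq_top_iff, ← top_le_iff, ← hH.sup_eq_top, sup_le_iff]
        constructor
        · refine Subgroup.le_normalizer_iff.mpr fun x hx k hk ↦ ?_
          rwa [hZcomm k (hNZ hk.1) x hx, mul_inv_cancel_right]
        · exact Subgroup.le_normalizer_iff.mpr fun x hx k hk ↦
            ⟨hN.conj_mem k hk.1 x, K.mul_mem (K.mul_mem (hHK.le hx) hk.2) (K.inv_mem (hHK.le hx))⟩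
      have hdecomp : ∀ k ∈ K, ∃ n ∈ N ⊓ K, ∃ x ∈ H, n * x = k := fun k hk ↦ by
        obtain ⟨n, hn, x, hx, rfl⟩ := Subgroup.mem_sup_of_normal_left.mp (hK.le hk)
        exact ⟨n, ⟨hn, by simpa using K.mul_mem hk (K.inv_mem (hHK.le hx))⟩, x, hx, rfl⟩
      by_cases hbot : N ⊓ K = ⊥
      · refine hHK.not_ge fun k hk ↦ ?_
        obtain ⟨n, hn, x, hx, rfl⟩ := hdecomp k hk
        rw [hbot, Subgroup.mem_bot] at hn
        simpa [hn] using hx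
      · have := hmin ⟨hNK, hbot, inf_le_left.trans hNZ⟩ inf_le_left
        exact hK.not_ge (sup_le (this.trans inf_le_right) hHK.le)
  have hp := h _ _ hcov
  rwa [Subgroup.relIndex_sup_of_inf_eq_bot hHN] at hp

theorem IsCyclicStep.comap_mk {G : Type*} [Group G] {N : Subgroup G} [N.Normal]
    {K L : Subgroup (G ⧸ N)} (h : IsCyclicStep K L) :
    IsCyclicStep (K.comap (QuotientGroup.mk' N)) (L.comap (QuotientGroup.mk' N)) := by
  obtain ⟨hK, hL, g, rfl⟩ := h
  obtain ⟨g, rfl⟩ := QuotientGroup.mk'_surjective N g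
  refine ⟨hK.comap _, hL.comap _, g, ?_⟩
  set f := QuotientGroup.mk' N
  have hf : Function.Surjective f := QuotientGroup.mk'_surjective N
  rw [← Subgroup.comap_map_eq_self (f := f) (H := K.comap f ⊔ Subgroup.zpowers g)
    ((Subgroup.ker_le_comap f K).trans le_sup_left), Subgroup.map_sup, MonoidHom.map_zpowers,
    Subgroup.map_comap_eq_self_of_surjective hf]

theorem HasPrimeCovers.isSupersolvableGroup {G : Type*} [Group G] [Finite G]
    (h : HasPrimeCovers G) : IsSupersolvableGroup G := by
  induction hn : Nat.card G using Nat.strong_induction_on generalizing G with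
  | _ n ih =>
    rw [isSupersolvableGroup_iff_reflTransGen]
    rcases subsingleton_or_nontrivial G with _ | _
    · rw [Subsingleton.elim (⊥ : Subgroup G) ⊤]
    obtain ⟨N, hN, hp⟩ := h.exists_normal_prime_card
    have hlt : Nat.card (G ⧸ N) < n := by
      rw [← hn, N.card_eq_card_quotient_mul_card_subgroup]
      exact lt_mul_of_one_lt_right Nat.card_pos hp.one_lt
    have hs := isSupersolvableGroup_iff_reflTransGen.mp (ih _ hlt (h.quotient N) rfl)
    have hs' : Relation.ReflTransGen IsCyclicStep ((⊥ : Subgroup (G ⧸ N)).comap (QuotientGroup.mk' N))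
        ((⊤ : Subgroup (G ⧸ N)).comap (QuotientGroup.mk' N)) := hs.lift _ fun _ _ h ↦ h.comap_mk
    rw [Subgroup.comap_top, MonoidHom.comap_bot, QuotientGroup.ker_mk'] at hs'
    refine .head ⟨inferInstance, hN, ?_⟩ hs'
    have : Fact (Nat.card N).Prime := ⟨hp⟩
    obtain ⟨g, hg⟩ := (isCyclic_of_prime_card (α := N) rfl).exists_zpow_surjective
    refine ⟨g, ?_⟩
    rw [bot_sup_eq]
    refine le_antisymm (fun x hx ↦ ?_) (Subgroup.zpowers_le.mpr g.2)
    obtain ⟨k, hk⟩ := hg ⟨x, hx⟩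
    exact Subgroup.mem_zpowers_iff.mpr ⟨k, by simpa using congrArg Subtype.val hk⟩

end PrimeCovers

section UniformChains

open scoped commutatorElement

/-- If `p < r`, then a normal `p`-subgroup is centralized by all `r`-subgroups. -/
theorem HasPrimeCovers.le_centralizer {E : Type*} [Group E] [Finite E] (h : HasPrimeCovers E)
    {p r : ℕ} [Fact p.Prime] [Fact r.Prime] (hpr : p < r) {D R : Subgroup E} [D.Normal]
    (hD : IsPGroup p D) (hR : IsPGroup r R) : R ≤ Subgroup.centralizer D := by
  have hdis : Disjoint D R := IsPGroup.disjoint_of_ne p r hpr.ne D R hD hR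
  have hidx : R.relIndex (D ⊔ R) = Nat.card D := Subgroup.relIndex_sup_of_inf_eq_bot hdis.eq_bot
  obtain ⟨a, ha⟩ := IsPGroup.iff_card.mp hD
  obtain ⟨b, hb⟩ := IsPGroup.iff_card.mp hR
  have hndvd : ¬ r ∣ (R.subgroupOf (D ⊔ R)).index := by
    intro hdvd
    rw [← Subgroup.relIndex, hidx, ha] at hdvd
    exact hpr.ne' ((Nat.prime_dvd_prime_iff_eq Fact.out Fact.out).mp
      ((Fact.out : r.Prime).dvd_of_dvd_pow hdvd))
  have hR' : IsPGroup r (R.subgroupOf (D ⊔ R)) :=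
    hR.of_equiv (Subgroup.subgroupOfEquivOfLe le_sup_right).symm
  have hcard : Nat.card ↥(D ⊔ R) = r ^ b * p ^ a := by
    rw [← Subgroup.card_mul_index (R.subgroupOf (D ⊔ R)), ← Subgroup.relIndex, hidx, ha,
      Nat.card_congr (Subgroup.subgroupOfEquivOfLe (le_sup_right : R ≤ D ⊔ R)).toEquiv, hb]
  have hnormal : (R.subgroupOf (D ⊔ R)).Normal := by
    refine (h.subgroup (D ⊔ R)).normal_sylow (fun q hq hdvd ↦ ?_) (hR'.toSylow hndvd)
    rw [hcard, hq.dvd_mul] at hdvd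
    rcases hdvd with hdvd | hdvd
    · exact Nat.le_of_dvd (Fact.out : r.Prime).pos (hq.dvd_of_dvd_pow hdvd)
    · exact (Nat.le_of_dvd (Fact.out : p.Prime).pos (hq.dvd_of_dvd_pow hdvd)).trans hpr.le
  have hdis' : Disjoint (D.subgroupOf (D ⊔ R)) (R.subgroupOf (D ⊔ R)) :=
    IsPGroup.disjoint_of_ne p r hpr.ne _ _
      (hD.of_equiv (Subgroup.subgroupOfEquivOfLe le_sup_left).symm) hR'
  intro x hx
  rw [Subgroup.mem_centralizer_iff]
  intro d hd
  have := Subgroup.commute_of_normal_of_disjoint _ _ inferInstance hnormal hdis'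
    ⟨d, Subgroup.mem_sup_left hd⟩ ⟨x, Subgroup.mem_sup_right hx⟩ hd hx
  exact congrArg Subtype.val this.eq

theorem HasPrimeCovers.sup_centralizer_eq_top {E : Type*} [Group E] [Finite E]
    (h : HasPrimeCovers E) {p : ℕ} [Fact p.Prime]
    (hp : ∀ q : ℕ, q.Prime → q ∣ Nat.card E → p ≤ q) {D : Subgroup E} [D.Normal]
    (hD : IsPGroup p D) (S : Sylow p E) : Subgroup.centralizer D ⊔ (S : Subgroup E) = ⊤ := by
  rw [← Subgroup.index_eq_one]
  by_contra hne
  obtain ⟨r, hr, hdvd⟩ := Nat.exists_prime_and_dvd hne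
  have : Fact r.Prime := ⟨hr⟩
  rcases (hp r hr (hdvd.trans (Subgroup.index_dvd_card _))).eq_or_lt with rfl | hlt
  · exact S.not_dvd_index (hdvd.trans (Subgroup.index_dvd_of_le le_sup_right))
  · obtain ⟨R⟩ : Nonempty (Sylow r E) := inferInstance
    exact R.not_dvd_index (hdvd.trans (Subgroup.index_dvd_of_le
      ((h.le_centralizer hlt hD R.isPGroup').trans le_sup_left)))

/-- Every element of the normalizer of a `p`-subgroup acts on it like an element of any
given Sylow `p`-subgroup of the normalizer. -/
def IsPInduced (p : ℕ) (G : Type*) [Group G] : Prop :=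
  ∀ D : Subgroup G, IsPGroup p D → ∀ S : Sylow p (Subgroup.normalizer (D : Set G)),
    ∀ n : Subgroup.normalizer (D : Set G), ∃ c ∈ Subgroup.centralizer (D : Set G), ∃ s ∈ S,
      c * s = (n : G)

theorem IsPGroup.lt_inf_normalizer {G : Type*} [Group G] [Finite G] {p : ℕ} [Fact p.Prime]
    {D P : Subgroup G} (hP : IsPGroup p P) (hDP : D < P) :
    D < P ⊓ Subgroup.normalizer (D : Set G) := by
  have := hP.isNilpotent
  have hlt : D.subgroupOf P < ⊤ := by
    rw [lt_top_iff_ne_top, Ne, Subgroup.subgroupOf_eq_top]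
    exact hDP.not_ge
  obtain ⟨-, x, hx, hxD⟩ := SetLike.lt_iff_le_and_exists.mp
    (Group.normalizerCondition_of_isNilpotent _ hlt)
  refine lt_of_le_not_ge (le_inf hDP.le Subgroup.le_normalizer) fun hle ↦ hxD (hle (x := x)
    ⟨x.2, Subgroup.mem_normalizer_iff.mpr fun d ↦ ?_⟩)
  by_cases hd : d ∈ P
  · exact Subgroup.mem_normalizer_iff.mp hx ⟨d, hd⟩
  · refine iff_of_false (fun h ↦ hd (hDP.le h)) fun h ↦ hd ?_
    rw [← P.mul_mem_cancel_left x.2, ← P.mul_mem_cancel_right (P.inv_mem x.2)]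
    exact hDP.le h

theorem Sylow.mem_smul_iff {G : Type*} [Group G] {p : ℕ} {P : Sylow p G} {g x : G} :
    x ∈ g • P ↔ g⁻¹ * x * g ∈ P := by
  rw [← SetLike.mem_coe, Sylow.coe_smul, Set.mem_smul_set_iff_inv_smul_mem, ← map_inv,
    MulAut.smul_def, MulAut.conj_apply, inv_inv, SetLike.mem_coe]

/-- Two Sylow subgroups are conjugate by an element centralizing their intersection. -/
theorem IsPInduced.exists_smul_eq {G : Type*} [Group G] [Finite G] {p : ℕ} [Fact p.Prime]
    (h : IsPInduced p G) (P Q : Sylow p G) :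
    ∃ c ∈ Subgroup.centralizer ((P ⊓ Q : Subgroup G) : Set G), c • P = Q := by
  induction hD : (P ⊓ Q : Subgroup G) using WellFoundedGT.induction generalizing P Q with
  | ind D ih =>
    by_cases hPQ : (P : Subgroup G) ≤ Q
    · exact ⟨1, one_mem _, by rw [one_smul]; exact Sylow.ext (P.is_maximal' Q.isPGroup' hPQ).symm⟩
    have hDP : D < P := hD ▸ inf_lt_left.mpr hPQ
    have hDQ : D < Q := hD ▸ inf_lt_right.mpr fun hQP ↦
      hPQ (Q.is_maximal' P.isPGroup' hQP).le
    set N := Subgroup.normalizer (D : Set G)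
    have hsub (P : Sylow p G) : IsPGroup p ((P : Subgroup G).subgroupOf N) :=
      P.isPGroup'.comap_of_injective _ (Subgroup.subtype_injective N)
    obtain ⟨S, hS⟩ := (hsub P).exists_le_sylow
    obtain ⟨T, hT⟩ := (hsub Q).exists_le_sylow
    obtain ⟨n, rfl⟩ := MulAction.exists_smul_eq N S T
    obtain ⟨c, hc, s, hs, hn⟩ := h D (P.isPGroup'.to_le hDP.le) S n
    obtain ⟨R, hR⟩ := (S.isPGroup'.map N.subtype).exists_le_sylow
    have hPR : (P : Subgroup G) ⊓ N ≤ (P ⊓ R : Subgroup G) :=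
      fun x hx ↦ ⟨hx.1, hR ⟨⟨x, hx.2⟩, hS hx.1, rfl⟩⟩
    have hQR : (Q : Subgroup G) ⊓ N ≤ (((c • R : Sylow p G) : Subgroup G) ⊓ Q : Subgroup G) := by
      refine fun x hx ↦ ⟨Sylow.mem_smul_iff.mpr ?_, hx.1⟩
      have hxS : n⁻¹ * ⟨x, hx.2⟩ * n ∈ S := Sylow.mem_smul_iff.mp (hT (x := ⟨x, hx.2⟩) hx.1)
      refine hR ⟨s * (n⁻¹ * ⟨x, hx.2⟩ * n) * s⁻¹, S.mul_mem (S.mul_mem hs hxS) (S.inv_mem hs), ?_⟩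
      simp [← hn, mul_assoc]
    have hDPR := (P.isPGroup'.lt_inf_normalizer hDP).trans_le hPR
    have hDQR := (Q.isPGroup'.lt_inf_normalizer hDQ).trans_le hQR
    obtain ⟨a, ha, hPa⟩ := ih _ hDPR P R rfl
    obtain ⟨b, hb, hQb⟩ := ih _ hDQR (c • R) Q rfl
    refine ⟨b * c * a, mul_mem (mul_mem ?_ hc) ?_, ?_⟩
    · exact Subgroup.centralizer_le hDQR.le hb
    · exact Subgroup.centralizer_le hDPR.le ha
    · rw [mul_smul, mul_smul, hPa, hQb]

theorem IsPInduced.focalSubgroup_le {G : Type*} [Group G] [Finite G] {p : ℕ} [Fact p.Prime]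
    (h : IsPInduced p G) (P : Sylow p G) :
    (P : Subgroup G).focalSubgroup ≤ ⁅(P : Subgroup G), (P : Subgroup G)⁆ := by
  rw [Subgroup.focalSubgroup_def, Subgroup.closure_le]
  rintro _ ⟨hxu, x, hx, u, rfl⟩
  have hy : u * x⁻¹ * u⁻¹ ∈ (P : Subgroup G) := by
    have := mul_mem (inv_mem hx) hxu
    simpa [commutatorElement_def, mul_assoc] using this
  obtain ⟨c, hc, hcu⟩ := h.exists_smul_eq (u • P) P
  rw [smul_smul, Sylow.smul_eq_iff_mem_normalizer] at hcu
  obtain ⟨d, hd, s, hs, hds⟩ := h P P.isPGroup' (P.subtype Subgroup.le_normalizer) ⟨c * u, hcu⟩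
  obtain ⟨s, hsN⟩ := s
  have hs : s ∈ (P : Subgroup G) := hs
  have hcy := Subgroup.mem_centralizer_iff.mp hc (u * x⁻¹ * u⁻¹)
    ⟨Sylow.mem_smul_iff.mpr (by
      simpa [mul_assoc] using show x ∈ P from hx), hy⟩
  have hdy := Subgroup.mem_centralizer_iff.mp hd (s * x⁻¹ * s⁻¹)
    (mul_mem (mul_mem hs (inv_mem hx)) (inv_mem hs))
  have hus : u * x⁻¹ * u⁻¹ = s * x⁻¹ * s⁻¹ := by
    calc u * x⁻¹ * u⁻¹ = c * (u * x⁻¹ * u⁻¹) * c⁻¹ := by rw [← hcy, mul_inv_cancel_right]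
      _ = (c * u) * x⁻¹ * (c * u)⁻¹ := by group
      _ = d * (s * x⁻¹ * s⁻¹) * d⁻¹ := by
        rw [show c * u = d * s from hds.symm]
        group
      _ = s * x⁻¹ * s⁻¹ := by rw [← hdy, mul_inv_cancel_right]
  have : ⁅x, u⁆ = ⁅x, s⁆ := by
    rw [commutatorElement_def, commutatorElement_def, mul_assoc, mul_assoc, mul_assoc, mul_assoc,
      ← mul_assoc u, hus, mul_assoc s]
  rw [SetLike.mem_coe, this]
  exact Subgroup.commutator_mem_commutator hx hs

/-- The fusion condition is incompatible with `G` being perfect of order divisible by `p`. -/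
theorem IsPInduced.commutator_ne_top {G : Type*} [Group G] [Finite G] {p : ℕ} [Fact p.Prime]
    (h : IsPInduced p G) (hp : p ∣ Nat.card G) : commutator G ≠ ⊤ := by
  intro htop
  obtain ⟨P⟩ : Nonempty (Sylow p G) := inferInstance
  have hle := h.focalSubgroup_le P
  rw [← Subgroup.commutator_inf_eq_focalSubgroup, htop, top_inf_eq] at hle
  have := P.isPGroup'.isNilpotent
  have : Nontrivial P := (Subgroup.nontrivial_iff_ne_bot _).mpr (P.ne_bot_of_dvd_card hp)
  refine (Group.IsSolvable.commutator_lt_top_of_nontrivial P).not_ge ?_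
  rwa [← Subgroup.map_subtype_le_map_subtype, ← MonoidHom.range_eq_map, Subgroup.range_subtype,
    Subgroup.map_subtype_commutator]

/-- In a simple group which is not a `p`-group for its smallest prime divisor `p`, and whose proper
subgroups have prime covers, the fusion condition holds for `p`. -/
theorem isPInduced_of_isSimpleGroup {G : Type*} [Group G] [Finite G] [IsSimpleGroup G] {p : ℕ}
    [Fact p.Prime] (hp : ∀ q : ℕ, q.Prime → q ∣ Nat.card G → p ≤ q) (hG : ¬ IsPGroup p G)
    (h : ∀ H : Subgroup G, H ≠ ⊤ → HasPrimeCovers H) : IsPInduced p G := by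
  intro D hD S n
  by_cases hbot : D = ⊥
  · refine ⟨n, ?_, 1, one_mem S, mul_one _⟩
    subst hbot
    simp [Subgroup.mem_centralizer_iff]
  have htop : D ≠ ⊤ := by
    rintro rfl
    exact hG (hD.of_equiv Subgroup.topEquiv)
  have hN : Subgroup.normalizer (D : Set G) ≠ ⊤ := fun hN ↦
    ((Subgroup.normalizer_eq_top_iff.mp hN).eq_bot_or_eq_top).elim hbot htop
  have hD' : IsPGroup p (D.subgroupOf (Subgroup.normalizer (D : Set G))) :=
    hD.comap_of_injective _ (Subgroup.subtype_injective _)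
  have hsup := (h _ hN).sup_centralizer_eq_top
    (fun q hq hdvd ↦ hp q hq (hdvd.trans (Subgroup.card_subgroup_dvd_card _))) hD' S
  obtain ⟨c, hc, s, hs, rfl⟩ :=
    Subgroup.mem_sup_of_normal_left.mp (hsup.ge (Subgroup.mem_top n))
  refine ⟨c, Subgroup.mem_centralizer_iff.mpr fun d hd ↦ ?_, s, hs, rfl⟩
  exact congrArg Subtype.val
    (Subgroup.mem_centralizer_iff.mp hc ⟨d, Subgroup.le_normalizer hd⟩ hd)

theorem HasPrimeCovers.of_prime_card {G : Type*} [Group G] (h : (Nat.card G).Prime) :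
    HasPrimeCovers G := by
  intro A B hAB
  have : Fact (Nat.card G).Prime := ⟨h⟩
  rcases A.eq_bot_or_eq_top_of_prime_card with rfl | rfl
  · rcases B.eq_bot_or_eq_top_of_prime_card with rfl | rfl
    · exact absurd hAB.lt (lt_irrefl _)
    · simpa using h
  · exact absurd hAB.lt not_top_lt

theorem HasPrimeCovers.of_isSimpleGroup {G : Type*} [Group G] [Finite G] [IsSimpleGroup G]
    (h : ∀ H : Subgroup G, H ≠ ⊤ → HasPrimeCovers H) : HasPrimeCovers G := by
  rcases (inferInstance : (Subgroup.center G).Normal).eq_bot_or_eq_top with hc | hc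
  · exfalso
    have hne : Nat.card G ≠ 1 := Finite.one_lt_card.ne'
    have : Fact (Nat.card G).minFac.Prime := ⟨Nat.minFac_prime hne⟩
    refine (isPInduced_of_isSimpleGroup (p := (Nat.card G).minFac)
      (fun q hq hdvd ↦ Nat.minFac_le_of_dvd hq.two_le hdvd) (fun hG ↦ ?_) h).commutator_ne_top
        (Nat.minFac_dvd _) ?_
    · exact hG.bot_lt_center.ne' hc
    · refine ((inferInstance : (commutator G).Normal).eq_bot_or_eq_top).resolve_left fun hcomm ↦ ?_
      rw [commutator_eq_bot_iff_center_eq_top, hc] at hcomm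
      exact bot_ne_top hcomm
  · let _ : CommGroup G := Group.commGroupOfCenterEqTop hc
    exact .of_prime_card IsSimpleGroup.prime_card

theorem HasUniformChains.hasPrimeCovers_of_finite {G : Type*} [Group G] [Finite G]
    (h : HasUniformChains G) : HasPrimeCovers G := by
  induction hn : Nat.card G using Nat.strong_induction_on generalizing G with
  | _ n ih =>
    subst hn
    have hsub (H : Subgroup G) (hH : H ≠ ⊤) : HasPrimeCovers H :=
      ih _ (lt_of_le_of_ne H.card_le_card_group fun heq ↦ hH (H.eq_top_of_card_eq heq))
        (h.subgroup H) rfl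
    rcases subsingleton_or_nontrivial G with _ | _
    · exact fun A B hAB ↦ absurd (Subsingleton.elim A B) hAB.lt.ne
    by_cases hN : ∃ N : Subgroup G, N.Normal ∧ N ≠ ⊥ ∧ N ≠ ⊤
    · obtain ⟨N, _, hbot, htop⟩ := hN
      refine h.hasPrimeCovers_of_normal N (hsub N htop) (ih _ ?_ (h.quotient N) rfl)
      rw [N.card_eq_card_quotient_mul_card_subgroup]
      exact lt_mul_of_one_lt_right Nat.card_pos (N.one_lt_card_iff_ne_bot.mpr hbot)
    · have : IsSimpleGroup G := ⟨fun N hN' ↦ by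
        by_contra! hne
        exact hN ⟨N, hN', hne⟩⟩
      exact .of_isSimpleGroup hsub

end UniformChains

/-- Iwasawa: a finite group satisfies `ℓ(G) = λ(G)` iff it is
supersolvable. -/
theorem groupLength_eq_groupDepth_iff_isSupersolvable (G : Type*) [Group G] [Finite G] :
    groupLength G = groupDepth G ↔ IsSupersolvableGroup G := by
  rw [groupLength_eq_groupDepth_iff_hasUniformChains]
  exact ⟨fun h ↦ h.hasPrimeCovers_of_finite.isSupersolvableGroup,
    fun h ↦ h.hasPrimeCovers.hasUniformChains⟩
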